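/- Let p be a prime with p ≡ 1 (mod 3) (and p odd). Then Σ_{k=0}^{(p−1)/3} (6k+1) (1/3)_k^3 / k!^3 ≡ p · Σ_{k=0}^{(p−1)/3} (1/3)_k^2 / (k! (2/3)_k) (mod p^3). -/

import Mathlib

open Finset

/-- The Pochhammer symbol `(a)_k = a(a+1)⋯(a+k-1)` for rational `a`. -/
def poch (a : ℚ) (k : ℕ) : ℚ := ∏ j ∈ Finset.range k, (a + j)


lemma poch_zero' (a : ℚ) : poch a 0 = 1 := by simp [poch]

lemma poch_succ' (a : ℚ) (k : ℕ) : poch a (k+1) = poch a k * (a + k) := by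
  simp [poch, Finset.prod_range_succ]

lemma poch_succ_left (a : ℚ) (k : ℕ) : poch a (k+1) = a * poch (a+1) k := by
  unfold poch
  rw [Finset.prod_range_succ']
  rw [mul_comm]
  congr 1
  · simp
  · apply Finset.prod_congr rfl
    intros; push_cast; ring

lemma poch_ne (a : ℚ) (h : ∀ j : ℕ, a + j ≠ 0) (k : ℕ) : poch a k ≠ 0 :=
  Finset.prod_ne_zero_iff.mpr fun j _ => h j

lemma poch_neg_zero (n : ℕ) : poch (-(n:ℚ)) (n+1) = 0 := by
  rw [poch_succ']; simp

/-- `(-n-1)_k (k-n-1) = (-n-1) (-n)_k` -/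
lemma poch_shift (a : ℚ) (k : ℕ) : poch a k * (a + k) = a * poch (a+1) k := by
  rw [← poch_succ', poch_succ_left]

/-- Chu–Vandermonde. -/
lemma vander (b c : ℚ) (hc : ∀ j : ℕ, c + j ≠ 0) (n : ℕ) :
    ∑ k ∈ range (n+1), poch b k * poch (-(n:ℚ)) k / ((k.factorial : ℚ) * poch c k)
      = poch (c - b) n / poch c n := by
  induction n with
  | zero => simp [poch_zero']
  | succ n ih =>
    have key : ∀ m : ℕ, ∑ k ∈ range (m+1),
        ((c + n) * (poch b k * poch (-((n:ℚ)+1)) k / ((k.factorial : ℚ) * poch c k))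
          - (c - b + n) * (poch b k * poch (-(n:ℚ)) k / ((k.factorial : ℚ) * poch c k)))
        = poch b (m+1) * poch (-(n:ℚ)) m / ((m.factorial : ℚ) * poch c m) := by
      intro m
      induction m with
      | zero => simp [poch_zero', poch_succ']
      | succ m ihm =>
        rw [Finset.sum_range_succ, ihm]
        have h1 := poch_succ_left (-((n:ℚ)+1)) m
        have e : -((n:ℚ)+1)+1 = -(n:ℚ) := by ring
        rw [e] at h1
        rw [h1, poch_succ' b (m+1), poch_succ' (-(n:ℚ)) m, poch_succ' c m, Nat.factorial_succ]
        have := poch_ne c hc m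
        have h2 := hc m
        have h3 : (m.factorial : ℚ) ≠ 0 := by positivity
        have h4 : (m:ℚ) + 1 ≠ 0 := by positivity
        push_cast
        field_simp
        ring
    have k2 := key (n+1)
    rw [poch_neg_zero, Finset.sum_sub_distrib, ← Finset.mul_sum, ← Finset.mul_sum,
      Finset.sum_range_succ (fun k => poch b k * poch (-(n:ℚ)) k / ((k.factorial : ℚ) * poch c k)),
      ih, poch_neg_zero] at k2
    simp only [mul_zero, zero_div, add_zero] at k2
    push_cast
    rw [poch_succ', poch_succ']
    have := poch_ne c hc n
    have h2 := hc n
    have h5 : ∀ S : ℚ, (c + n) * S - (c - b + n) * (poch (c-b) n / poch c n) = 0 →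
       S = poch (c - b) n * (c - b + n) / (poch c n * (c + n)) := by
      intro S hS
      field_simp at hS ⊢
      linarith
    apply h5
    exact k2

lemma third_ne (j : ℕ) : (2/3 : ℚ) + j ≠ 0 := by positivity

/-- The terminating very-well-poised `5F4` sum with `a = 1/3, d = 2/3`. -/
lemma wellpoised (b : ℚ) (hb : ∀ j : ℕ, 4/3 - b + j ≠ 0) (n : ℕ) :
    ∑ k ∈ range (n+1), (6*(k:ℚ)+1) * poch (1/3) k * poch b k * poch (-(n:ℚ)) k /
        ((k.factorial : ℚ) * poch (4/3 - b) k * poch (4/3 + n) k)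
      = poch (4/3) n * poch (2/3 - b) n / (poch (4/3 - b) n * poch (2/3) n) := by
  induction n with
  | zero => simp [poch_zero']
  | succ n ih =>
    have hn : ∀ j : ℕ, (4/3 : ℚ) + n + j ≠ 0 := fun j => by positivity
    have key : ∀ m : ℕ, ∑ k ∈ range (m+1),
        ((4/3 - b + n) * (2/3 + n) * ((6*(k:ℚ)+1) * poch (1/3) k * poch b k * poch (-((n:ℚ)+1)) k /
        ((k.factorial : ℚ) * poch (4/3 - b) k * poch (4/3 + ((n:ℚ)+1)) k))
          - (4/3 + n) * (2/3 - b + n) * ((6*(k:ℚ)+1) * poch (1/3) k * poch b k * poch (-(n:ℚ)) k /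
        ((k.factorial : ℚ) * poch (4/3 - b) k * poch (4/3 + n) k)))
        = (4/3 + n) * (3*m+2) * poch (1/3) (m+1) * poch b (m+1) * poch (-(n:ℚ)) m /
          ((m.factorial : ℚ) * poch (4/3 - b) m * poch (4/3 + n) (m+1)) := by
      intro m
      induction m with
      | zero =>
        have := hn 0
        simp [poch_zero', poch_succ'] at this ⊢
        field_simp
        ring
      | succ m ihm =>
        rw [Finset.sum_range_succ, ihm]
        have h1 := poch_succ_left (-((n:ℚ)+1)) m
        have e : -((n:ℚ)+1)+1 = -(n:ℚ) := by ring
        rw [e] at h1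
        have h6 : poch (4/3 + ((n:ℚ)+1)) (m+1)
            = poch (4/3+n) (m+1) * (4/3 + n + (m+1)) / (4/3+n) := by
          have := poch_shift (4/3+(n:ℚ)) (m+1)
          have h0 := hn 0
          simp only [Nat.cast_zero, add_zero] at h0
          rw [eq_div_iff h0]
          push_cast at this
          rw [this, add_assoc]; ring
        have e0 := hn 0
        have e1 := hn m
        have e2 := hn (m+1)
        have e3 := hb m
        have e4 := poch_ne _ hb m
        have e5 := poch_ne _ hn m
        rw [h1, h6, poch_succ' b (m+1), poch_succ' (1/3) (m+1), poch_succ' (4/3+(n:ℚ)) (m+1),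
          poch_succ' (4/3+(n:ℚ)) m, poch_succ' (-(n:ℚ)) m,
          poch_succ' (4/3-b) m, Nat.factorial_succ]
        have h3 : (m.factorial : ℚ) ≠ 0 := by positivity
        have h4 : (m:ℚ) + 1 ≠ 0 := by positivity
        push_cast at e2 ⊢
        simp only [Nat.cast_zero, add_zero] at e0
        generalize poch (1/3) (m+1) = P1
        generalize poch b (m+1) = P2
        generalize poch (-(n:ℚ)) m = P3
        generalize poch (4/3-b) m = P4 at *
        generalize poch (4/3+(n:ℚ)) m = P5 at *
        generalize (m.factorial : ℚ) = P6 at *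
        obtain ⟨X0, hX0⟩ : ∃ X, X = 4/3 + (n:ℚ) := ⟨_, rfl⟩
        obtain ⟨X3, hX3⟩ : ∃ X, X = 4/3 - b + (m:ℚ) := ⟨_, rfl⟩
        obtain ⟨X1, hX1⟩ : ∃ X, X = X0 + (m:ℚ) := ⟨_, rfl⟩
        obtain ⟨X2, hX2⟩ : ∃ X, X = X0 + ((m:ℚ)+1) := ⟨_, rfl⟩
        rw [← hX0] at e0 e1 e2 ⊢
        rw [← hX1] at e1 ⊢
        rw [← hX2] at e2 ⊢
        rw [← hX3] at e3 ⊢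
        field_simp
        subst hX3 hX2 hX1 hX0
        ring
    have k2 := key (n+1)
    rw [poch_neg_zero, Finset.sum_sub_distrib, ← Finset.mul_sum, ← Finset.mul_sum,
      Finset.sum_range_succ (fun k => (6*(k:ℚ)+1) * poch (1/3) k * poch b k * poch (-(n:ℚ)) k /
        ((k.factorial : ℚ) * poch (4/3 - b) k * poch (4/3 + n) k)),
      ih, poch_neg_zero] at k2
    simp only [mul_zero, zero_div, add_zero] at k2
    push_cast
    rw [poch_succ', poch_succ', poch_succ', poch_succ']
    have e1 := poch_ne _ hb n
    have e2 := hb n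
    have e3 := poch_ne _ third_ne n
    have e4 := third_ne n
    have h5 : ∀ S : ℚ, (4/3 - b + n) * (2/3 + n) * S - (4/3 + n) * (2/3 - b + n) *
        (poch (4/3) n * poch (2/3 - b) n / (poch (4/3 - b) n * poch (2/3) n)) = 0 →
       S = poch (4/3) n * (4/3 + n) * (poch (2/3 - b) n * (2/3 - b + n)) /
        (poch (4/3 - b) n * (4/3 - b + n) * (poch (2/3) n * (2/3 + n))) := by
      intro S hS
      generalize poch (4/3-b) n = P4 at *
      generalize poch (2/3) n = P5 at *
      generalize poch (4/3) n = P6 at *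
      generalize poch (2/3-b) n = P7 at *
      rw [eq_div_iff (by positivity)]
      have : (4/3 - b + n) * (2/3 + n) * S = (4/3 + n) * (2/3 - b + n) * (P6 * P7 / (P4 * P5)) := by
        linarith
      calc S * (P4 * (4/3 - b + n) * (P5 * (2/3 + n)))
          = (4/3 - b + n) * (2/3 + n) * S * (P4 * P5) := by ring
        _ = _ := by rw [this]; field_simp
    apply h5
    exact k2

/-- Common value: the two deformed sums agree. -/
lemma deformed_eq (n : ℕ) (hn : Even n) :
    ∑ k ∈ range (n+1), (6*(k:ℚ)+1) * poch (1/3) k * poch (n + 2/3) k * poch (-(n:ℚ)) k /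
        ((k.factorial : ℚ) * poch (2/3 - n) k * poch (4/3 + n) k)
      = (3*n+1) * ∑ k ∈ range (n+1),
        poch (n+2/3) k * poch (-(n:ℚ)) k / ((k.factorial : ℚ) * poch (2/3) k) := by
  have hb : ∀ j : ℕ, (4/3 : ℚ) - (n+2/3) + j ≠ 0 := by
    intro j h
    have : (2 + 3 * j : ℚ) = 3 * n := by linarith
    have h2 : 2 + 3 * j = 3 * n := by exact_mod_cast this
    omega
  have e : (4/3 : ℚ) - (n+2/3) = 2/3 - n := by ring
  have h := wellpoised _ hb n
  rw [vander _ _ third_ne]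
  have e1 := poch_ne _ hb n
  rw [e] at h e1
  rw [h]
  have e3 := poch_ne _ third_ne n
  have h1 : poch (4/3) n = (3*n+1) * poch (1/3) n := by
    have := poch_shift (1/3) n
    norm_num at this
    linarith
  have h2 : poch (2/3 - n) n = poch (1/3) n := by
    unfold poch
    rw [← Finset.prod_range_reflect]
    have : ∏ j ∈ range n, ((1/3 : ℚ) + j) = (∏ j ∈ range n, (-1 : ℚ)) * ∏ j ∈ range n, ((1/3 : ℚ) + j) := by
      simp [hn.neg_one_pow]
    rw [this, ← Finset.prod_mul_distrib]
    apply Finset.prod_congr rfl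
    intro j hj
    have hj := Finset.mem_range.mp hj
    rw [Nat.sub_sub, Nat.cast_sub (by omega)]
    push_cast; ring
  rw [h1, h2]
  rw [h2] at e1
  field_simp

/-- congruence mod `p` relative to a subring -/
def Cg (O : Subring ℚ) (p : ℚ) (x y : ℚ) : Prop := ∃ z ∈ O, x = y + p * z

lemma Cg.refl (O : Subring ℚ) (p x : ℚ) : Cg O p x x := ⟨0, O.zero_mem, by simp⟩

lemma Cg.add {O : Subring ℚ} {p x y x' y' : ℚ} (h : Cg O p x y) (h' : Cg O p x' y') :
    Cg O p (x + x') (y + y') := by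
  obtain ⟨z, hz, rfl⟩ := h
  obtain ⟨w, hw, rfl⟩ := h'
  exact ⟨z + w, O.add_mem hz hw, by ring⟩

lemma Cg.mul {O : Subring ℚ} {p x y x' y' : ℚ} (hp : p ∈ O) (hy : y ∈ O) (hy' : y' ∈ O)
    (h : Cg O p x y) (h' : Cg O p x' y') :
    Cg O p (x * x') (y * y') := by
  obtain ⟨z, hz, rfl⟩ := h
  obtain ⟨w, hw, rfl⟩ := h'
  exact ⟨z * y' + y * w + p * (z * w), O.add_mem (O.add_mem (O.mul_mem hz hy') (O.mul_mem hy hw))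
    (O.mul_mem hp (O.mul_mem hz hw)), by ring⟩

lemma Cg.sum {O : Subring ℚ} {p : ℚ} (s : Finset ℕ) (f g : ℕ → ℚ)
    (h : ∀ i ∈ s, Cg O p (f i) (g i)) : Cg O p (∑ i ∈ s, f i) (∑ i ∈ s, g i) := by
  induction s using Finset.induction_on with
  | empty => exact Cg.refl _ _ _
  | insert a s ha ih =>
    rw [Finset.sum_insert ha, Finset.sum_insert ha]
    exact (h a (Finset.mem_insert_self _ _)).add (ih fun i hi => h i (Finset.mem_insert_of_mem hi))

def hh (k : ℕ) : ℚ := ∑ j ∈ range k, (1/((j:ℚ)+1)^2 - 1/(1/3+(j:ℚ))^2)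
def HH (k : ℕ) : ℚ := ∑ j ∈ range k, 1/((j:ℚ)+1)^2


lemma inv_three (O : Subring ℚ) (p n : ℕ) (hpn : p = 3 * n + 1)
    (hO : ∀ m : ℤ, ¬ (p:ℤ) ∣ m → (m:ℚ)⁻¹ ∈ O) (hn : 0 < n) : (1/3 : ℚ) ∈ O := by
  have := hO 3 (by
    intro h
    have := Int.le_of_dvd (by norm_num) h
    omega)
  simpa using this

lemma inv_small (O : Subring ℚ) (p n : ℕ) (hpn : p = 3 * n + 1)
    (hO : ∀ m : ℤ, ¬ (p:ℤ) ∣ m → (m:ℚ)⁻¹ ∈ O) (m : ℕ) (h0 : 0 < m) (h1 : m < p) : (1/(m:ℚ)) ∈ O := by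
  have := hO m (by
    intro h
    have := Int.le_of_dvd (by exact_mod_cast h0) h
    omega)
  simpa using this

lemma inv_al (O : Subring ℚ) (p n : ℕ) (hpn : p = 3 * n + 1)
    (hO : ∀ m : ℤ, ¬ (p:ℤ) ∣ m → (m:ℚ)⁻¹ ∈ O) (j : ℕ) (hj : j < n) : 1/(1/3+(j:ℚ)) ∈ O := by
  have := inv_small O p n hpn hO (3*j+1) (by omega) (by omega)
  have h2 := O.mul_mem (natCast_mem O 3) this
  convert h2 using 1
  push_cast
  have : (1/3+(j:ℚ)) ≠ 0 := by positivity
  field_simp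
  ring

lemma inv_be (O : Subring ℚ) (p n : ℕ) (hpn : p = 3 * n + 1)
    (hO : ∀ m : ℤ, ¬ (p:ℤ) ∣ m → (m:ℚ)⁻¹ ∈ O) (j : ℕ) (hj : j < n) : 1/((j:ℚ)+1) ∈ O := by
  have := inv_small O p n hpn hO (j+1) (by omega) (by omega)
  simpa using this

lemma al_mem (O : Subring ℚ) (p n : ℕ) (hpn : p = 3 * n + 1)
    (hO : ∀ m : ℤ, ¬ (p:ℤ) ∣ m → (m:ℚ)⁻¹ ∈ O) (hn : 0 < n) (j : ℕ) : (1/3+(j:ℚ)) ∈ O :=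
  O.add_mem (inv_three O p n hpn hO hn) (natCast_mem O j)

lemma be_y (O : Subring ℚ) (p n : ℕ) (hpn : p = 3 * n + 1)
    (hO : ∀ m : ℤ, ¬ (p:ℤ) ∣ m → (m:ℚ)⁻¹ ∈ O) (j : ℕ) (hj : j < n) :
    ((j:ℚ)+1)^2 - ((p:ℚ)/3)^2 ≠ 0 ∧ 1/(((j:ℚ)+1)^2 - ((p:ℚ)/3)^2) ∈ O := by
  have a1 : ¬ (p:ℤ) ∣ (3*(j+1) - p) := by
    intro h
    have h2 : (p:ℤ) ∣ 3*(j+1) := by simpa using (dvd_add h (dvd_refl (p:ℤ)))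
    have := Int.le_of_dvd (by omega) h2
    omega
  have a2 : ¬ (p:ℤ) ∣ (3*(j+1) + p) := by
    intro h
    have h2 : (p:ℤ) ∣ 3*(j+1) := by simpa using h
    have := Int.le_of_dvd (by omega) h2
    omega
  have b1 : (3*(j+1) - p : ℚ) ≠ 0 := by
    intro h
    apply a1
    have : (3*(j+1) - p : ℤ) = 0 := by exact_mod_cast h
    rw [this]; exact dvd_zero _
  have b2 : (3*(j+1) + p : ℚ) ≠ 0 := by positivity
  have e : ((j:ℚ)+1)^2 - ((p:ℚ)/3)^2 = (3*(j+1) - p) * (3*(j+1)+p) / 9 := by ring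
  rw [e]
  refine ⟨by positivity, ?_⟩
  have c1 := hO _ a1
  have c2 := hO _ a2
  push_cast at c1 c2
  convert O.mul_mem (natCast_mem O 9) (O.mul_mem c1 c2) using 1
  push_cast
  field_simp

lemma hh_mem (O : Subring ℚ) (p n : ℕ) (hpn : p = 3 * n + 1)
    (hO : ∀ m : ℤ, ¬ (p:ℤ) ∣ m → (m:ℚ)⁻¹ ∈ O) (k : ℕ) (hk : k ≤ n) : hh k ∈ O := by
  apply O.sum_mem
  intro j hj
  have hj := Finset.mem_range.mp hj
  have h1 := O.pow_mem (inv_al O p n hpn hO j (by omega)) 2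
  have h2 := O.pow_mem (inv_be O p n hpn hO j (by omega)) 2
  rw [one_div_pow] at h1 h2
  exact O.sub_mem h2 h1

lemma HH_mem (O : Subring ℚ) (p n : ℕ) (hpn : p = 3 * n + 1)
    (hO : ∀ m : ℤ, ¬ (p:ℤ) ∣ m → (m:ℚ)⁻¹ ∈ O) (k : ℕ) (hk : k ≤ n) : HH k ∈ O := by
  apply O.sum_mem
  intro j hj
  have hj := Finset.mem_range.mp hj
  have h2 := O.pow_mem (inv_be O p n hpn hO j (by omega)) 2
  rw [one_div_pow] at h2
  exact h2

lemma expand (O : Subring ℚ) (p n : ℕ) (hpn : p = 3 * n + 1)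
    (hO : ∀ m : ℤ, ¬ (p:ℤ) ∣ m → (m:ℚ)⁻¹ ∈ O) (hn : 0 < n) (k : ℕ) (hk : k ≤ n) : ∃ e ∈ O,
    poch (1/3 + (p:ℚ)/3) k * poch (1/3 - (p:ℚ)/3) k / (poch (1 - (p:ℚ)/3) k * poch (1 + (p:ℚ)/3) k)
    = poch (1/3) k ^ 2 / (k.factorial : ℚ) ^ 2 *
      (1 + ((p:ℚ)/3)^2 * hh k + ((p:ℚ)/3)^4 * e) := by
  induction k with
  | zero => exact ⟨0, O.zero_mem, by simp [poch_zero', hh]⟩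
  | succ k ih =>
    obtain ⟨e, he, h⟩ := ih (by omega)
    obtain ⟨b1, b2⟩ := be_y O p n hpn hO k (by omega)
    have hy : ((p:ℚ)/3)^2 ∈ O := by
      apply O.pow_mem
      have := O.mul_mem (natCast_mem O p) (inv_three O p n hpn hO hn)
      convert this using 1; ring
    have hA := inv_al O p n hpn hO k (by omega)
    have hB := inv_be O p n hpn hO k (by omega)
    have hd : (1/((k:ℚ)+1)^2 - 1/(1/3+(k:ℚ))^2) ∈ O := by
      have h1 := O.pow_mem hA 2
      have h2 := O.pow_mem hB 2
      rw [one_div_pow] at h1 h2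
      exact O.sub_mem h2 h1
    have hk' := hh_mem O p n hpn hO k (by omega)
    obtain ⟨d, hdd⟩ : ∃ d, d = (1/((k:ℚ)+1)^2 - 1/(1/3+(k:ℚ))^2) := ⟨_, rfl⟩
    obtain ⟨y, hyy⟩ : ∃ y, y = ((p:ℚ)/3)^2 := ⟨_, rfl⟩
    obtain ⟨w, hw⟩ : ∃ w, w = 1/(((k:ℚ)+1)^2 - ((p:ℚ)/3)^2) := ⟨_, rfl⟩
    rw [← hyy] at hy
    rw [← hdd] at hd
    rw [← hw] at b2
    have hs : hh (k+1) = hh k + d := by rw [hh, Finset.sum_range_succ, ← hdd]; rfl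
    have e4 : ((p:ℚ)/3)^4 = y^2 := by rw [hyy]; ring
    rw [hs, e4, ← hyy]
    rw [e4, ← hyy] at h
    have fac : (1/3 + (p:ℚ)/3 + k) * (1/3 - (p:ℚ)/3 + k) / ((1 - (p:ℚ)/3 + k) * (1 + (p:ℚ)/3 + k))
        = (1/3 + (k:ℚ))^2/((k:ℚ)+1)^2 * (1 + y * d + y^2 * (d * w)) := by
      have e1 : (1/3 + (p:ℚ)/3 + k) * (1/3 - (p:ℚ)/3 + k) = (1/3+(k:ℚ))^2 - y := by rw [hyy]; ring
      have e2 : (1 - (p:ℚ)/3 + k) * (1 + (p:ℚ)/3 + k) = ((k:ℚ)+1)^2 - y := by rw [hyy]; ring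
      rw [e1, e2]
      rw [← hyy] at hw b1
      rw [hw, hdd]
      have n1 : (1/3+(k:ℚ)) ≠ 0 := by positivity
      have n2 : ((k:ℚ)+1) ≠ 0 := by positivity
      generalize (1/3+(k:ℚ)) = A at *
      generalize ((k:ℚ)+1) = B at *
      field_simp
      ring
    refine ⟨e + d * w + hh k * d + y * (hh k * (d * w) + e * d) + y^2 * (e * (d*w)), ?_, ?_⟩
    · exact O.add_mem (O.add_mem (O.add_mem (O.add_mem he (O.mul_mem hd b2)) (O.mul_mem hk' hd))
        (O.mul_mem hy (O.add_mem (O.mul_mem hk' (O.mul_mem hd b2)) (O.mul_mem he hd))))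
        (O.mul_mem (O.pow_mem hy 2) (O.mul_mem he (O.mul_mem hd b2)))
    · rw [poch_succ', poch_succ', poch_succ', poch_succ', poch_succ', Nat.factorial_succ]
      calc _ = (poch (1/3 + (p:ℚ)/3) k * poch (1/3 - (p:ℚ)/3) k /
              (poch (1 - (p:ℚ)/3) k * poch (1 + (p:ℚ)/3) k)) *
            ((1/3 + (p:ℚ)/3 + k) * (1/3 - (p:ℚ)/3 + k) /
              ((1 - (p:ℚ)/3 + k) * (1 + (p:ℚ)/3 + k))) := by
            rw [div_mul_div_comm]; congr 1 <;> ring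
        _ = _ := by
            rw [h, fac]; push_cast
            have n2 : ((k:ℚ)+1) ≠ 0 := by positivity
            have n3 : (k.factorial:ℚ) ≠ 0 := by positivity
            field_simp
            ring

lemma expand2 (O : Subring ℚ) (p n : ℕ) (hpn : p = 3 * n + 1)
    (hO : ∀ m : ℤ, ¬ (p:ℤ) ∣ m → (m:ℚ)⁻¹ ∈ O) (hn : 0 < n) (k : ℕ) (hk : k ≤ n) : ∃ e ∈ O,
    poch (1/3 + (p:ℚ)/3) k * poch (1/3 - (p:ℚ)/3) k
    = poch (1/3) k ^ 2 + (p:ℚ)^2 * e := by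
  have h3 := inv_three O p n hpn hO hn
  have hq : poch (1/3) k ∈ O := O.prod_mem fun j _ => al_mem O p n hpn hO hn j
  clear hk
  induction k with
  | zero => exact ⟨0, O.zero_mem, by simp [poch_zero']⟩
  | succ k ih =>
    have hq : poch (1/3) k ∈ O := O.prod_mem fun j _ => al_mem O p n hpn hO hn j
    obtain ⟨e, he, h⟩ := ih hq
    have ha := al_mem O p n hpn hO hn k
    refine ⟨e * (1/3+(k:ℚ))^2 - (1/3)^2 * (poch (1/3) k ^ 2 + (p:ℚ)^2 * e), ?_, ?_⟩
    · exact O.sub_mem (O.mul_mem he (O.pow_mem ha 2)) (O.mul_mem (O.pow_mem h3 2)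
        (O.add_mem (O.pow_mem hq 2) (O.mul_mem (O.pow_mem (natCast_mem O p) 2) he)))
    · rw [poch_succ', poch_succ', poch_succ']
      linear_combination ((1/3+(k:ℚ))^2 - (p/3)^2) * h

lemma binom_cg (O : Subring ℚ) (p n : ℕ) (hpn : p = 3 * n + 1)
    (hO : ∀ m : ℤ, ¬ (p:ℤ) ∣ m → (m:ℚ)⁻¹ ∈ O) (hn : 0 < n) (k : ℕ) (hk : k ≤ n) :
    Cg O p (poch (1/3) k / k.factorial) ((-1)^k * (n.choose k : ℚ)) := by
  induction k with
  | zero => simpa [poch_zero'] using Cg.refl O p 1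
  | succ k ih =>
    have ih := ih (by omega)
    have hB := inv_be O p n hpn hO k (by omega)
    have h3 := inv_three O p n hpn hO hn
    have c1 : Cg O p (1/3 + (k:ℚ)) (-((n:ℚ) - k)) := ⟨1/3, h3, by rw [hpn]; push_cast; ring⟩
    have m1 : -((n:ℚ) - k) ∈ O := O.neg_mem (O.sub_mem (natCast_mem O n) (natCast_mem O k))
    have c2 := c1.mul (natCast_mem O p) m1 hB (Cg.refl O p (1/((k:ℚ)+1)))
    have m2 : (-1)^k * (n.choose k : ℚ) ∈ O :=
      O.mul_mem (O.pow_mem (O.neg_mem O.one_mem) k) (natCast_mem O _)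
    have c3 := ih.mul (natCast_mem O p) m2 (O.mul_mem m1 hB) c2
    have n1 : ((k:ℚ)+1) ≠ 0 := by positivity
    have n2 : (k.factorial:ℚ) ≠ 0 := by positivity
    convert c3 using 1
    · rw [poch_succ', Nat.factorial_succ]; push_cast; field_simp
    · have := Nat.choose_succ_right_eq n k
      have h : (n.choose (k+1) : ℚ) * (k+1) = n.choose k * (n - k) := by
        rw [← Nat.cast_sub (by omega : k ≤ n)]; exact_mod_cast this
      field_simp
      rw [pow_succ]
      linear_combination (-(-1)^k) * h

lemma hh_cg (O : Subring ℚ) (p n : ℕ) (hpn : p = 3 * n + 1)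
    (hO : ∀ m : ℤ, ¬ (p:ℤ) ∣ m → (m:ℚ)⁻¹ ∈ O) (k : ℕ) (hk : k ≤ n) (hn : 0 < n) :
    Cg O p (hh k) (HH k + HH (n-k) - HH n) := by
  induction k with
  | zero => simpa [hh, HH] using Cg.refl O p 0
  | succ k ih =>
    have ih := ih (by omega)
    have hs : hh (k+1) = hh k + (1/((k:ℚ)+1)^2 - 1/(1/3+(k:ℚ))^2) := by
      rw [hh, Finset.sum_range_succ]; rfl
    have hs1 : HH (k+1) = HH k + 1/((k:ℚ)+1)^2 := by simp [HH, Finset.sum_range_succ]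
    obtain ⟨m, hm⟩ : ∃ m, n = k + 1 + m := ⟨n - (k+1), by omega⟩
    have hs2 : HH (n-k) = HH (n-(k+1)) + 1/((n:ℚ)-k)^2 := by
      have e1 : n - k = m + 1 := by omega
      have e2 : n - (k+1) = m := by omega
      rw [e1, e2]
      simp [HH, Finset.sum_range_succ, hm]
      ring
    have hA := inv_al O p n hpn hO k (by omega)
    have hC : 1/((n:ℚ)-k) ∈ O := by
      have := inv_be O p n hpn hO m (by omega)
      convert this using 2
      rw [hm]; push_cast; ring
    have n1 : (1/3+(k:ℚ)) ≠ 0 := by positivity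
    have n2 : ((n:ℚ)-k) ≠ 0 := by
      have : ((n:ℚ)-k) = m + 1 := by rw [hm]; push_cast; ring
      rw [this]; positivity
    have h3 := inv_three O p n hpn hO hn
    have c1 : Cg O p (1/(1/3+(k:ℚ))) (-(1/((n:ℚ)-k))) := by
      refine ⟨1/3 * (1/(1/3+(k:ℚ)) * (1/((n:ℚ)-k))), O.mul_mem h3 (O.mul_mem hA hC), ?_⟩
      have : (p:ℚ) = 3 * ((1/3+(k:ℚ)) + ((n:ℚ)-k)) := by rw [hpn]; push_cast; ring
      rw [this]
      generalize (1/3+(k:ℚ)) = A at *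
      generalize ((n:ℚ)-k) = B at *
      field_simp
      ring
    have c2 := c1.mul (natCast_mem O p) (O.neg_mem hC) (O.neg_mem hC) c1
    obtain ⟨z, hz, h⟩ := ih
    obtain ⟨w, hw, h'⟩ := c2
    refine ⟨z - w, O.sub_mem hz hw, ?_⟩
    rw [hs, hs1, h, hs2]
    have e1 : 1/(1/3+(k:ℚ))^2 = 1/(1/3+(k:ℚ)) * (1/(1/3+(k:ℚ))) := by field_simp
    rw [e1, h']
    have e2 : 1/((n:ℚ)-k)^2 = -(1/((n:ℚ)-k)) * -(1/((n:ℚ)-k)) := by field_simp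
    rw [e2]; ring

lemma sum_cg (O : Subring ℚ) (p n : ℕ) (hpn : p = 3 * n + 1)
    (hO : ∀ m : ℤ, ¬ (p:ℤ) ∣ m → (m:ℚ)⁻¹ ∈ O) (hn : 0 < n) (he : Even n) : ∃ z ∈ O,
    ∑ k ∈ range (n+1), (6*(k:ℚ)+1) * (poch (1/3) k / k.factorial)^3 * hh k = p * z := by
  have key : Cg O p (∑ k ∈ range (n+1), (6*(k:ℚ)+1) * (poch (1/3) k / k.factorial)^3 * hh k)
    (∑ k ∈ range (n+1), (3*(2*(k:ℚ)-n)) * ((-1)^k * (n.choose k : ℚ))^3 *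
      (HH k + HH (n-k) - HH n)) := by
    apply Cg.sum
    intro k hk
    have hk : k ≤ n := by have := Finset.mem_range.mp hk; omega
    have c1 := binom_cg O p n hpn hO hn k hk
    have m2 : (-1)^k * (n.choose k : ℚ) ∈ O :=
      O.mul_mem (O.pow_mem (O.neg_mem O.one_mem) k) (natCast_mem O _)
    have c2 := hh_cg O p n hpn hO k hk hn
    have m3 : HH k + HH (n-k) - HH n ∈ O := O.sub_mem (O.add_mem (HH_mem O p n hpn hO k hk)
      (HH_mem O p n hpn hO _ (by omega))) (HH_mem O p n hpn hO _ le_rfl)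
    have hp := natCast_mem O p
    have c0 : Cg O p (6*(k:ℚ)+1) (3*(2*(k:ℚ)-n)) := ⟨1, O.one_mem, by rw [hpn]; push_cast; ring⟩
    have m0 : (3*(2*(k:ℚ)-n)) ∈ O := by
      have := intCast_mem O (3*(2*(k:ℤ)-n))
      push_cast at this; exact this
    have c3 := (c1.mul hp m2 m2 c1).mul hp (O.mul_mem m2 m2) m2 c1
    have c4 := (c0.mul hp m0 (O.mul_mem (O.mul_mem m2 m2) m2) c3).mul hp
      (O.mul_mem m0 (O.mul_mem (O.mul_mem m2 m2) m2)) m3 c2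
    convert c4 using 1 <;> ring
  have zero : ∑ k ∈ range (n+1), (3*(2*(k:ℚ)-n)) * ((-1)^k * (n.choose k : ℚ))^3 *
      (HH k + HH (n-k) - HH n) = 0 := by
    have hr := Finset.sum_range_reflect (fun k : ℕ => (3*(2*(k:ℚ)-n)) *
      ((-1)^k * (n.choose k : ℚ))^3 * (HH k + HH (n-k) - HH n)) (n+1)
    have hneg : ∑ j ∈ range (n+1), (fun k : ℕ => (3*(2*(k:ℚ)-n)) *
      ((-1)^k * (n.choose k : ℚ))^3 * (HH k + HH (n-k) - HH n)) (n+1-1-j) =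
      - ∑ k ∈ range (n+1), (3*(2*(k:ℚ)-n)) * ((-1)^k * (n.choose k : ℚ))^3 *
      (HH k + HH (n-k) - HH n) := by
      rw [← Finset.sum_neg_distrib]
      apply Finset.sum_congr rfl
      intro k hk
      have hk : k ≤ n := by have := Finset.mem_range.mp hk; omega
      have e1 : n + 1 - 1 - k = n - k := by omega
      have e2 : n - (n - k) = k := by omega
      have e3 : (-1:ℚ)^(n-k) = (-1)^k := by
        rcases Nat.even_or_odd k with h | h
        · rw [h.neg_one_pow, (Nat.even_sub hk |>.mpr (by tauto)).neg_one_pow]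
        · rw [h.neg_one_pow, Odd.neg_one_pow]
          exact Nat.Even.sub_odd hk he h
      simp only [e1, e2, e3, Nat.choose_symm hk, Nat.cast_sub hk]
      ring
    rw [hneg] at hr
    linarith
  obtain ⟨z, hz, h⟩ := key
  exact ⟨z, hz, by rw [h, zero, zero_add]⟩

lemma main_lemma (O : Subring ℚ) (p n : ℕ) (hpn : p = 3 * n + 1)
    (hO : ∀ m : ℤ, ¬ (p:ℤ) ∣ m → (m:ℚ)⁻¹ ∈ O) (hn : 0 < n) (he : Even n) : ∃ z ∈ O,
    (∑ k ∈ Finset.range (n + 1),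
          (6 * (k : ℚ) + 1) * poch (1/3) k ^ 3 / ((k.factorial : ℚ)) ^ 3) -
        ((p : ℚ) *
          ∑ k ∈ Finset.range (n + 1),
            poch (1/3) k ^ 2 / ((k.factorial : ℚ) * poch (2/3) k)) = (p:ℚ)^3 * z := by
  have h3 := inv_three O p n hpn hO hn
  have hp := natCast_mem O p
  have hP : (p:ℚ) = 3 * n + 1 := by rw [hpn]; push_cast; ring
  have ea : (1/3 : ℚ) + (p:ℚ)/3 = n + 2/3 := by rw [hP]; ring
  have eb : (1/3 : ℚ) - (p:ℚ)/3 = -(n:ℚ) := by rw [hP]; ring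
  have ec : (1 : ℚ) - (p:ℚ)/3 = 2/3 - n := by rw [hP]; ring
  have ed : (1 : ℚ) + (p:ℚ)/3 = 4/3 + n := by rw [hP]; ring
  have D := deformed_eq n he
  -- first sum
  have X1 : ∀ k ∈ range (n+1), ∃ e ∈ O,
      (6*(k:ℚ)+1) * poch (1/3) k * poch (n + 2/3) k * poch (-(n:ℚ)) k /
        ((k.factorial : ℚ) * poch (2/3 - n) k * poch (4/3 + n) k)
      = (6 * (k : ℚ) + 1) * poch (1/3) k ^ 3 / ((k.factorial : ℚ)) ^ 3
        + ((p:ℚ)/3)^2 * ((6*(k:ℚ)+1) * (poch (1/3) k / k.factorial)^3 * hh k)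
        + (p:ℚ)^3 * e := by
    intro k hk
    have hk : k ≤ n := by have := Finset.mem_range.mp hk; omega
    obtain ⟨e, he, h⟩ := expand O p n hpn hO hn k hk
    rw [ea, eb, ec, ed] at h
    have hr : poch (1/3) k / k.factorial ∈ O := by
      obtain ⟨z, hz, h⟩ := binom_cg O p n hpn hO hn k hk
      rw [h]
      exact O.add_mem (O.mul_mem (O.pow_mem (O.neg_mem O.one_mem) k) (natCast_mem O _))
        (O.mul_mem hp hz)
    have m0 : (6*(k:ℚ)+1) ∈ O := by
      have := natCast_mem O (6*k+1)
      push_cast at this; exact this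
    refine ⟨(6*(k:ℚ)+1) * (poch (1/3) k / k.factorial)^3 * ((1/3)^4 * p * e), ?_, ?_⟩
    · exact O.mul_mem (O.mul_mem m0 (O.pow_mem hr 3)) (O.mul_mem (O.mul_mem (O.pow_mem h3 4) hp) he)
    · calc _ = (6*(k:ℚ)+1) * (poch (1/3) k / k.factorial) *
            (poch (n + 2/3) k * poch (-(n:ℚ)) k / (poch (2/3 - n) k * poch (4/3 + n) k)) := by
            rw [mul_div_assoc' (6*(k:ℚ)+1), div_mul_div_comm]; congr 1 <;> ring
        _ = _ := by rw [h]; ring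
  have X2 : ∀ k ∈ range (n+1), ∃ e ∈ O,
      poch (n+2/3) k * poch (-(n:ℚ)) k / ((k.factorial : ℚ) * poch (2/3) k)
      = poch (1/3) k ^ 2 / ((k.factorial : ℚ) * poch (2/3) k) + (p:ℚ)^2 * e := by
    intro k hk'
    have hk : k ≤ n := by have := Finset.mem_range.mp hk'; omega
    obtain ⟨e, he, h⟩ := expand2 O p n hpn hO hn k hk
    rw [ea, eb] at h
    have hi : 1 / ((k.factorial : ℚ) * poch (2/3) k) ∈ O := by
      clear h hk'
      induction k with
      | zero => simp [poch_zero']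
      | succ k ih =>
        have ih := ih (by omega)
        have hB := inv_be O p n hpn hO k (by omega)
        have h2 := inv_small O p n hpn hO (3*k+2) (by omega) (by omega)
        convert O.mul_mem ih (O.mul_mem hB (O.mul_mem (natCast_mem O 3) h2)) using 1
        rw [poch_succ', Nat.factorial_succ]
        have e3 := poch_ne _ third_ne k
        have e4 := third_ne k
        push_cast
        have e5 : (2/3 : ℚ) + k = (3*k+2)/3 := by ring
        rw [e5]
        field_simp
    refine ⟨e * (1 / ((k.factorial : ℚ) * poch (2/3) k)), O.mul_mem he hi, ?_⟩
    rw [h]; ring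
  choose! E1 hE1 h1 using X1
  choose! E2 hE2 h2 using X2
  rw [Finset.sum_congr rfl h1, Finset.sum_congr rfl h2, Finset.sum_add_distrib,
    Finset.sum_add_distrib, Finset.sum_add_distrib, ← Finset.mul_sum, ← Finset.mul_sum,
    ← Finset.mul_sum] at D
  obtain ⟨z, hz, hzz⟩ := sum_cg O p n hpn hO hn he
  rw [hzz, ← hP] at D
  refine ⟨∑ k ∈ range (n+1), E2 k - (1/3)^2 * z - ∑ k ∈ range (n+1), E1 k, ?_, ?_⟩
  · exact O.sub_mem (O.sub_mem (O.sum_mem hE2) (O.mul_mem (O.pow_mem h3 2) hz)) (O.sum_mem hE1)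
  · linear_combination D

theorem stmt12 (p : ℕ) [Fact p.Prime] (hodd : Odd p) (hp3 : p % 3 = 1) :
    ‖(((∑ k ∈ Finset.range ((p - 1) / 3 + 1),
          (6 * (k : ℚ) + 1) * poch (1/3) k ^ 3 / ((k.factorial : ℚ)) ^ 3) -
        ((p : ℚ) *
          ∑ k ∈ Finset.range ((p - 1) / 3 + 1),
            poch (1/3) k ^ 2 / ((k.factorial : ℚ) * poch (2/3) k)) : ℚ) : ℚ_[p])‖ ≤
      (p : ℝ) ^ (-3 : ℤ) := by
  have hp2 := (Fact.out : p.Prime).two_le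
  obtain ⟨n, hn⟩ : ∃ n, n = (p-1)/3 := ⟨_, rfl⟩
  have hpn : p = 3 * n + 1 := by omega
  have he : Even n := by
    rw [Nat.odd_iff] at hodd
    rw [Nat.even_iff]; omega
  rw [← hn]
  obtain ⟨z, hz, h⟩ := main_lemma ((PadicInt.subring p).comap (Rat.castHom ℚ_[p])) p n hpn (by
    intro m hm
    rw [Subring.mem_comap, PadicInt.mem_subring_iff]
    simp only [Rat.coe_castHom, Rat.cast_inv, Rat.cast_intCast, norm_inv]
    have h1 : ‖(m : ℚ_[p])‖ = 1 := by
      apply le_antisymm (Padic.norm_int_le_one m)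
      by_contra hlt
      exact hm (Padic.norm_intCast_lt_one_iff.mp (not_le.mp hlt))
    rw [h1]; simp) (by omega) he
  rw [h]
  rw [Subring.mem_comap, PadicInt.mem_subring_iff] at hz
  simp only [Rat.coe_castHom] at hz
  push_cast
  rw [norm_mul, norm_pow, Padic.norm_p]
  have : (p:ℝ)^(-3:ℤ) = ((p:ℝ)⁻¹)^3 := by
    rw [zpow_neg, inv_pow]; norm_cast
  rw [this]
  have : (0:ℝ) ≤ ((p:ℝ)⁻¹)^3 := by positivity
  nlinarith
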